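/- Let B be an open subset of the half-plane ℍ = {(H,r) ∈ ℝ² : r > 0}, let ξ = (ξ₁,ξ₂) : B → ℝ² be C¹, and let μ : B → ℝ² be a C¹ diffeomorphism onto an open set U ⊆ ℝ² whose Jacobian matrix at each (H,r) ∈ B equals r·[[∂ξ₂/∂r, −∂ξ₂/∂H], [−∂ξ₁/∂r, ∂ξ₁/∂H]]. Let u : U → ℝ be a C² function whose gradient satisfies ∇u = ξ ∘ μ⁻¹ on U. Then for every x ∈ U the Hessian matrix of u at x equals ( Dξ · Dξᵗ / ( r · det Dξ ) ) evaluated at μ⁻¹(x), where Dξ is the 2×2 matrix with rows (∂ξ₁/∂H, ∂ξ₁/∂r) and (∂ξ₂/∂H, ∂ξ₂/∂r). -/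

import Mathlib

open Matrix

/-- Partial derivative in the first (`H`) direction of a function on `ℝ × ℝ`. -/
noncomputable def pdH (f : ℝ × ℝ → ℝ) (p : ℝ × ℝ) : ℝ := fderiv ℝ f p (1, 0)

/-- Partial derivative in the second (`r`) direction of a function on `ℝ × ℝ`. -/
noncomputable def pdr (f : ℝ × ℝ → ℝ) (p : ℝ × ℝ) : ℝ := fderiv ℝ f p (0, 1)

/-- The matrix `Dξ` with rows `(∂ξ₁/∂H, ∂ξ₁/∂r)` and `(∂ξ₂/∂H, ∂ξ₂/∂r)`. -/
noncomputable def Dxi (ξ₁ ξ₂ : ℝ × ℝ → ℝ) (p : ℝ × ℝ) : Matrix (Fin 2) (Fin 2) ℝ :=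
  !![pdH ξ₁ p, pdr ξ₁ p; pdH ξ₂ p, pdr ξ₂ p]

/-- Let `ξ = (ξ₁, ξ₂)` be `C¹` on an open subset `B` of the half-plane `{r > 0}` and let
`μ : B → ℝ²` be a `C¹` diffeomorphism onto an open set `U` (with inverse `μinv`) whose
Jacobian matrix at each `(H, r) ∈ B` is `r·[[∂ξ₂/∂r, −∂ξ₂/∂H], [−∂ξ₁/∂r, ∂ξ₁/∂H]]`.
If `u : U → ℝ` is `C²` with `∇u = ξ ∘ μ⁻¹` on `U`, then at every `x ∈ U` the Hessian
matrix of `u` equals `Dξ·Dξᵗ / (r·det Dξ)` evaluated at `μ⁻¹(x)`. -/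
theorem hessian_formula
    (B : Set (ℝ × ℝ)) (hBopen : IsOpen B) (hBhalf : ∀ p ∈ B, 0 < p.2)
    (ξ₁ ξ₂ : ℝ × ℝ → ℝ)
    (hξ₁ : ContDiffOn ℝ 1 ξ₁ B) (hξ₂ : ContDiffOn ℝ 1 ξ₂ B)
    (μ μinv : ℝ × ℝ → ℝ × ℝ) (U : Set (ℝ × ℝ)) (hUopen : IsOpen U)
    (hμC : ContDiffOn ℝ 1 μ B) (hμinvC : ContDiffOn ℝ 1 μinv U)
    (hμmaps : Set.MapsTo μ B U) (hμinvmaps : Set.MapsTo μinv U B)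
    (hleft : ∀ p ∈ B, μinv (μ p) = p) (hright : ∀ x ∈ U, μ (μinv x) = x)
    (hJacH : ∀ p ∈ B, fderiv ℝ μ p (1, 0) = (p.2 * pdr ξ₂ p, -(p.2 * pdr ξ₁ p)))
    (hJacr : ∀ p ∈ B, fderiv ℝ μ p (0, 1) = (-(p.2 * pdH ξ₂ p), p.2 * pdH ξ₁ p))
    (u : ℝ × ℝ → ℝ) (hu : ContDiffOn ℝ 2 u U)
    (hgrad : ∀ x ∈ U, pdH u x = ξ₁ (μinv x) ∧ pdr u x = ξ₂ (μinv x)) :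
    ∀ x ∈ U,
      !![pdH (pdH u) x, pdr (pdH u) x; pdH (pdr u) x, pdr (pdr u) x]
        = ((μinv x).2 * (Dxi ξ₁ ξ₂ (μinv x)).det)⁻¹ •
            (Dxi ξ₁ ξ₂ (μinv x) * (Dxi ξ₁ ξ₂ (μinv x))ᵀ) := by
  intro x hx
  have hp := hμinvmaps hx
  have hr := hBhalf _ hp
  have hU := hUopen.mem_nhds hx
  have hB := hBopen.mem_nhds hp
  have d1 : DifferentiableAt ℝ ξ₁ (μinv x) :=
    (hξ₁.differentiableOn one_ne_zero).differentiableAt hB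
  have d2 : DifferentiableAt ℝ ξ₂ (μinv x) :=
    (hξ₂.differentiableOn one_ne_zero).differentiableAt hB
  have dm : DifferentiableAt ℝ μ (μinv x) :=
    (hμC.differentiableOn one_ne_zero).differentiableAt hB
  have di : DifferentiableAt ℝ μinv x :=
    (hμinvC.differentiableOn one_ne_zero).differentiableAt hU
  have e1 : fderiv ℝ (pdH u) x = (fderiv ℝ ξ₁ (μinv x)).comp (fderiv ℝ μinv x) := by
    rw [← fderiv_comp x d1 di]
    apply Filter.EventuallyEq.fderiv_eq
    filter_upwards [hU] with y hy using (hgrad y hy).1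
  have e2 : fderiv ℝ (pdr u) x = (fderiv ℝ ξ₂ (μinv x)).comp (fderiv ℝ μinv x) := by
    rw [← fderiv_comp x d2 di]
    apply Filter.EventuallyEq.fderiv_eq
    filter_upwards [hU] with y hy using (hgrad y hy).2
  have e3 : (fderiv ℝ μ (μinv x)).comp (fderiv ℝ μinv x) = ContinuousLinearMap.id ℝ (ℝ × ℝ) := by
    rw [← fderiv_comp x dm di, ← fderiv_id (𝕜 := ℝ) (x := x)]
    apply Filter.EventuallyEq.fderiv_eq
    filter_upwards [hU] with y hy using hright y hy
  have key : ∀ {F : Type} [NormedAddCommGroup F] [NormedSpace ℝ F] (L : ℝ × ℝ →L[ℝ] F)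
      (v : ℝ × ℝ), L v = v.1 • L (1, 0) + v.2 • L (0, 1) := by
    intro F _ _ L v
    rw [← map_smul, ← map_smul, ← map_add]
    simp
  have m1 := congrArg (fun L => L (1, 0)) e3
  have m2 := congrArg (fun L => L (0, 1)) e3
  simp only [ContinuousLinearMap.comp_apply, ContinuousLinearMap.id_apply] at m1 m2
  rw [key (fderiv ℝ μ (μinv x)), hJacH _ hp, hJacr _ hp] at m1 m2
  have a11 : pdH (pdH u) x = (fderiv ℝ μinv x (1, 0)).1 * pdH ξ₁ (μinv x)
      + (fderiv ℝ μinv x (1, 0)).2 * pdr ξ₁ (μinv x) := by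
    rw [pdH, e1, ContinuousLinearMap.comp_apply, key]; rfl
  have a12 : pdr (pdH u) x = (fderiv ℝ μinv x (0, 1)).1 * pdH ξ₁ (μinv x)
      + (fderiv ℝ μinv x (0, 1)).2 * pdr ξ₁ (μinv x) := by
    rw [pdr, e1, ContinuousLinearMap.comp_apply, key]; rfl
  have a21 : pdH (pdr u) x = (fderiv ℝ μinv x (1, 0)).1 * pdH ξ₂ (μinv x)
      + (fderiv ℝ μinv x (1, 0)).2 * pdr ξ₂ (μinv x) := by
    rw [pdH, e2, ContinuousLinearMap.comp_apply, key]; rfl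
  have a22 : pdr (pdr u) x = (fderiv ℝ μinv x (0, 1)).1 * pdH ξ₂ (μinv x)
      + (fderiv ℝ μinv x (0, 1)).2 * pdr ξ₂ (μinv x) := by
    rw [pdr, e2, ContinuousLinearMap.comp_apply, key]; rfl
  rw [a11, a12, a21, a22]
  simp only [Dxi, Matrix.det_fin_two_of]
  generalize (fderiv ℝ μinv x (1, 0)) = v at *
  generalize (fderiv ℝ μinv x (0, 1)) = w at *
  obtain ⟨a, b⟩ := v
  obtain ⟨c, d⟩ := w
  generalize pdH ξ₁ (μinv x) = e at *
  generalize pdr ξ₁ (μinv x) = f at *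
  generalize pdH ξ₂ (μinv x) = g at *
  generalize pdr ξ₂ (μinv x) = h at *
  generalize (μinv x).2 = r at *
  simp only [Prod.smul_mk, Prod.mk_add_mk, Prod.mk.injEq, smul_eq_mul] at m1 m2
  obtain ⟨m11, m12⟩ := m1
  obtain ⟨m21, m22⟩ := m2
  have hD : r * (e * h - f * g) ≠ 0 := by
    intro h0
    have h1 : (r * (e * h - f * g)) * (r * (a * d - b * c)) = 1 := by
      linear_combination (c * (-(r * f)) + d * (r * e)) * m11
        - (c * (r * h) + d * (-(r * g))) * m12 + m22
    rw [h0, zero_mul] at h1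
    exact zero_ne_one h1
  have ha : a = (r * (e * h - f * g))⁻¹ * e := by
    rw [eq_inv_mul_iff_mul_eq₀ hD]; linear_combination e * m11 + g * m12
  have hb : b = (r * (e * h - f * g))⁻¹ * f := by
    rw [eq_inv_mul_iff_mul_eq₀ hD]; linear_combination f * m11 + h * m12
  have hc : c = (r * (e * h - f * g))⁻¹ * g := by
    rw [eq_inv_mul_iff_mul_eq₀ hD]; linear_combination e * m21 + g * m22
  have hd : d = (r * (e * h - f * g))⁻¹ * h := by
    rw [eq_inv_mul_iff_mul_eq₀ hD]; linear_combination f * m21 + h * m22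
  generalize (r * (e * h - f * g))⁻¹ = k at *
  subst ha hb hc hd
  ext i j
  fin_cases i <;> fin_cases j <;> simp [Matrix.vecMul, dotProduct, Fin.sum_univ_two] <;> ring
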